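/- Let v be a vertex that has all iterated bases defined (i.e., base^k(v) is an unmatched vertex for some k) and let p be an evenlevel(v) or oddlevel(v) path. Then for each vertex u lying on p, all iterated bases of u lie on p. -/

import Mathlib

attribute [local instance] Classical.propDecidable

variable {V : Type*} [DecidableEq V]

namespace MV

/-- A walk is alternating (w.r.t. matching `M`) in the sense used for alternating paths
starting at an unmatched vertex: the `i`-th edge is matched iff `i` is odd. -/
def IsAlt (G : SimpleGraph V) (M : G.Subgraph) {a b : V} (w : G.Walk a b) : Prop :=
  ∀ i (h : i < w.edges.length), (w.edges.get ⟨i, h⟩ ∈ M.edgeSet ↔ Odd i)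

/-- length of a minimum even alternating path from an unmatched vertex to `v`. -/
noncomputable def evenlevel (G : SimpleGraph V) (M : G.Subgraph) (v : V) : ℕ∞ :=
  sInf {n : ℕ∞ | ∃ (f : V) (w : G.Walk f v),
    f ∉ M.verts ∧ w.IsPath ∧ IsAlt G M w ∧ Even w.length ∧ n = (w.length : ℕ∞)}

/-- length of a minimum odd alternating path from an unmatched vertex to `v`. -/
noncomputable def oddlevel (G : SimpleGraph V) (M : G.Subgraph) (v : V) : ℕ∞ :=
  sInf {n : ℕ∞ | ∃ (f : V) (w : G.Walk f v),
    f ∉ M.verts ∧ w.IsPath ∧ IsAlt G M w ∧ Odd w.length ∧ n = (w.length : ℕ∞)}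

noncomputable def tenacity (G : SimpleGraph V) (M : G.Subgraph) (v : V) : ℕ∞ :=
  evenlevel G M v + oddlevel G M v

noncomputable def minlevel (G : SimpleGraph V) (M : G.Subgraph) (v : V) : ℕ∞ :=
  min (evenlevel G M v) (oddlevel G M v)

noncomputable def maxlevel (G : SimpleGraph V) (M : G.Subgraph) (v : V) : ℕ∞ :=
  max (evenlevel G M v) (oddlevel G M v)

/-- the length of a minimum length augmenting path w.r.t. `M` (`⊤` if none exists). -/
noncomputable def lm (G : SimpleGraph V) (M : G.Subgraph) : ℕ∞ :=
  sInf {n : ℕ∞ | ∃ (f g : V) (w : G.Walk f g), f ∉ M.verts ∧ g ∉ M.verts ∧ f ≠ g ∧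
    w.IsPath ∧ IsAlt G M w ∧ Odd w.length ∧ n = (w.length : ℕ∞)}

/-- `w` is a minimum even- or odd-length alternating path from an unmatched vertex to `v`
  (an `evenlevel(v)` or `oddlevel(v)` path). -/
def IsMinPathTo (G : SimpleGraph V) (M : G.Subgraph) (v f : V) (w : G.Walk f v) : Prop :=
  f ∉ M.verts ∧ w.IsPath ∧ IsAlt G M w ∧
    ((Even w.length ∧ (w.length : ℕ∞) = evenlevel G M v) ∨
     (Odd w.length ∧ (w.length : ℕ∞) = oddlevel G M v))

/-- `b` is the vertex of tenacity greater than `tenacity v` on `w` furthest from the start. -/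
def IsFurthestHigh (G : SimpleGraph V) (M : G.Subgraph) (v : V) {f v' : V}
    (w : G.Walk f v') (b : V) : Prop :=
  ∃ hb : b ∈ w.support, tenacity G M v < tenacity G M b ∧
    ∀ u, ∀ hu : u ∈ w.support, tenacity G M v < tenacity G M u →
      (w.takeUntil u hu).length ≤ (w.takeUntil b hb).length

/-- `b` is the base of `v`: the furthest higher-tenacity vertex on every minimum
even or odd alternating path to `v`. -/
def IsBase (G : SimpleGraph V) (M : G.Subgraph) (v b : V) : Prop :=
  ∀ (f : V) (w : G.Walk f v), IsMinPathTo G M v f w → IsFurthestHigh G M v w b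

/-- minimum even length alternating path from `b` to `v` starting with an unmatched edge
  (`evenlevel(b; v)`). -/
noncomputable def evenlevelFrom (G : SimpleGraph V) (M : G.Subgraph) (b v : V) : ℕ∞ :=
  sInf {n : ℕ∞ | ∃ w : G.Walk b v,
    w.IsPath ∧ IsAlt G M w ∧ Even w.length ∧ n = (w.length : ℕ∞)}

/-- minimum odd length alternating path from `b` to `v` starting with an unmatched edge
  (`oddlevel(b; v)`). -/
noncomputable def oddlevelFrom (G : SimpleGraph V) (M : G.Subgraph) (b v : V) : ℕ∞ :=
  sInf {n : ℕ∞ | ∃ w : G.Walk b v,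
    w.IsPath ∧ IsAlt G M w ∧ Odd w.length ∧ n = (w.length : ℕ∞)}

def Outer (G : SimpleGraph V) (M : G.Subgraph) (v : V) : Prop :=
  evenlevel G M v < oddlevel G M v

/-- The blossom `B_{b,t}`, defined recursively, relative to a base function `bse`. -/
noncomputable def blossom (G : SimpleGraph V) (M : G.Subgraph) (bse : V → V) :
    ℕ → V → Set V
  | 0, _ => ∅
  | 1, _ => ∅
  | (t + 2), b =>
      {v | tenacity G M v = ((t + 2 : ℕ) : ℕ∞) ∧ bse v = b} ∪
      ⋃ v ∈ {u | (u = b ∨ (tenacity G M u = ((t + 2 : ℕ) : ℕ∞) ∧ bse u = b)) ∧ Outer G M u},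
        blossom G M bse t v

/-- The nesting depth `N(B_{b,t})`. -/
noncomputable def nestDepth (G : SimpleGraph V) (M : G.Subgraph) (bse : V → V) :
    ℕ → V → ℕ
  | 0, _ => 0
  | 1, _ => 0
  | (t + 2), b =>
      if {v | tenacity G M v = ((t + 2 : ℕ) : ℕ∞) ∧ bse v = b}.Nonempty then
        1 + sSup ((fun v => nestDepth G M bse t v) ''
          {u | (u = b ∨ (tenacity G M u = ((t + 2 : ℕ) : ℕ∞) ∧ bse u = b)) ∧ Outer G M u})
      else nestDepth G M bse t b

/-- `bse` assigns to each vertex of tenacity `< l_m` its (unique) base. -/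
def BaseFn (G : SimpleGraph V) (M : G.Subgraph) (bse : V → V) : Prop :=
  ∀ v, tenacity G M v < lm G M → IsBase G M v (bse v)

/-- `u` is a predecessor of `v`: `(u,v)` is the last edge of some `minlevel(v)` path. -/
def IsPred (G : SimpleGraph V) (M : G.Subgraph) (u v : V) : Prop :=
  ∃ (f : V) (w : G.Walk f v), f ∉ M.verts ∧ w.IsPath ∧ IsAlt G M w ∧
    (w.length : ℕ∞) = minlevel G M v ∧
    0 < w.length ∧ w.getVert (w.length - 1) = u

/-- A bridge is an edge of `G` that is not a prop. -/
def IsBridge (G : SimpleGraph V) (M : G.Subgraph) (u v : V) : Prop :=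
  G.Adj u v ∧ ¬ IsPred G M u v ∧ ¬ IsPred G M v u

/-- tenacity of an edge. -/
noncomputable def edgeTenacity (G : SimpleGraph V) (M : G.Subgraph) (u v : V) : ℕ∞ :=
  if s(u, v) ∈ M.edgeSet then oddlevel G M u + oddlevel G M v + 1
  else evenlevel G M u + evenlevel G M v + 1

/-! ### Abstract system of alternating paths, as reversed vertex lists -/

structure Sys (U : Type*) where
  Ad : U → U → Prop
  Mt : U → U → Prop
  F : U → Prop
  K : ℕ
  ad_symm : ∀ {x y}, Ad x y → Ad y x
  mt_symm : ∀ {x y}, Mt x y → Mt y x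
  mt_ad : ∀ {x y}, Mt x y → Ad x y
  mt_uniq : ∀ {x y z}, Mt x y → Mt x z → y = z
  mt_ne : ∀ {x y}, Mt x y → x ≠ y
  mt_nF : ∀ {x y}, Mt x y → ¬ F x

namespace Sys

variable {U : Type*} (S : Sys U)

def St (n : ℕ) (x y : U) : Prop := S.Ad x y ∧ (S.Mt x y ↔ n % 2 = 1)

inductive AP : List U → Prop
  | base (f : U) : S.F f → AP [f]
  | step (x y : U) (l : List U) : AP (x :: l) → S.St l.length x y → y ∉ x :: l →
      AP (y :: x :: l)

noncomputable def lev (i : ℕ) (u : U) : ℕ :=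
  sInf {n | n = S.K ∨ (n % 2 = i % 2 ∧ ∃ l, S.AP (u :: l) ∧ l.length = n)}

noncomputable def ten (u : U) : ℕ := S.lev 0 u + S.lev 1 u

def Mn (u : U) (l : List U) : Prop := S.AP (u :: l) ∧ l.length = S.lev l.length u

def Bs (T : ℕ) (u b : U) : Prop :=
  S.ten u < T ∧ ∀ l, S.Mn u l → ∃ A B, u :: l = A ++ b :: B ∧ (∀ a ∈ A, S.ten a < T) ∧ T ≤ S.ten b

def BB (T : ℕ) (u b : U) : Prop := S.Bs T u b ∨ (T ≤ S.ten u ∧ b = u)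

variable {S}

theorem St.symm {n : ℕ} {x y : U} (h : S.St n x y) : S.St n y x :=
  ⟨S.ad_symm h.1, ⟨fun k => h.2.1 (S.mt_symm k), fun k => S.mt_symm (h.2.2 k)⟩⟩

theorem St.par {n m : ℕ} {x y : U} (h : S.St n x y) (e : n % 2 = m % 2) : S.St m x y := by
  unfold St at *; rw [← e]; exact h

theorem AP_cons {x y : U} {l : List U} :
    S.AP (y :: x :: l) ↔ S.AP (x :: l) ∧ S.St l.length x y ∧ y ∉ x :: l := by
  constructor
  · intro h
    cases h with
    | step _ _ _ h1 h2 h3 => exact ⟨h1, h2, h3⟩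
  · rintro ⟨h1, h2, h3⟩
    exact AP.step _ _ _ h1 h2 h3

theorem AP.nodup {l : List U} (h : S.AP l) : l.Nodup := by
  induction h with
  | base f _ => simp
  | step x y l _ _ h3 ih => exact List.nodup_cons.2 ⟨h3, ih⟩

theorem AP_sub {A : List U} {u : U} {B : List U} (h : S.AP (A ++ u :: B)) : S.AP (u :: B) := by
  induction A with
  | nil => exact h
  | cons a A ih =>
    apply ih
    cases A with
    | nil => exact (AP_cons.1 h).1
    | cons a' A => exact (AP_cons.1 h).1

theorem AP_F {f : U} (h : S.AP [f]) : S.F f := by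
  cases h with
  | base _ h => exact h

theorem AP_cat {A : List U} {z : U} {B C : List U} (h : S.AP (A ++ z :: B)) (hC : S.AP (z :: C))
    (e : B.length % 2 = C.length % 2) (d : ∀ a ∈ A, a ∉ C) : S.AP (A ++ z :: C) := by
  induction A with
  | nil => exact hC
  | cons a A ih =>
    cases A with
    | nil =>
      have h' := AP_cons.1 h
      refine AP_cons.2 ⟨hC, h'.2.1.par e, ?_⟩
      have := d a (by simp)
      have := h'.2.2
      simp_all
    | cons a' A =>
      have h' := AP_cons.1 h
      refine AP_cons.2 ⟨ih h'.1 (fun x hx => d x (List.mem_cons_of_mem _ hx)), h'.2.1.par ?_, ?_⟩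
      · simp; omega
      · have h1 := d a (by simp)
        have h2 : a ∉ a' :: (A ++ z :: B) := h'.2.2
        change a ∉ a' :: (A ++ z :: C)
        simp only [List.mem_cons, List.mem_append, not_or] at h2 ⊢
        tauto

theorem AP_rev {D : List U} {z : U} {B C : List U} (h : S.AP (z :: D ++ B)) (hC : S.AP (z :: C))
    (d : ∀ a ∈ D, a ∉ C) (e : D ≠ [] → (C.length + D.length + B.length) % 2 = 1) :
    S.AP (D.reverse ++ z :: C) := by
  induction D generalizing z C with
  | nil => exact hC
  | cons k D ih =>
    have h' := AP_cons.1 h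
    have e' := e (by simp)
    simp only [List.length_cons] at e'
    have := ih (z := k) (C := z :: C) h'.1 (AP_cons.2 ⟨hC, ?_, ?_⟩) ?_ ?_
    · simpa using this
    · refine h'.2.1.symm.par ?_
      simp; omega
    · have h1 := d k (by simp)
      have h2 := h'.2.2
      simp only [List.mem_cons, not_or] at h2 ⊢
      exact ⟨fun h => h2.1 h.symm, h1⟩
    · intro a ha
      have h1 := d a (by simp [ha])
      have h2 : z ∉ k :: (D ++ B) := h'.2.2
      simp only [List.mem_cons, List.mem_append, not_or] at h2 ⊢
      exact ⟨fun h => h2.2.1 (h ▸ ha), h1⟩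
    · intro _
      simp; omega

/-! list helpers -/

theorem l_first {P : U → Prop} {L : List U} (h : ∃ z ∈ L, P z) :
    ∃ A z B, L = A ++ z :: B ∧ P z ∧ ∀ a ∈ A, ¬ P a := by
  induction L with
  | nil => simp at h
  | cons a L ih =>
    by_cases ha : P a
    · exact ⟨[], a, L, rfl, ha, by simp⟩
    · have : ∃ z ∈ L, P z := by
        obtain ⟨z, hz, hp⟩ := h
        rcases List.mem_cons.1 hz with rfl | hz
        · exact absurd hp ha
        · exact ⟨z, hz, hp⟩
      obtain ⟨A, z, B, e, hp, hA⟩ := ih this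
      refine ⟨a :: A, z, B, by simp [e], hp, ?_⟩
      intro x hx
      rcases List.mem_cons.1 hx with rfl | hx
      · exact ha
      · exact hA x hx

theorem l_last {P : U → Prop} {L : List U} (h : ∃ z ∈ L, P z) :
    ∃ A z B, L = A ++ z :: B ∧ P z ∧ ∀ a ∈ B, ¬ P a := by
  have : ∃ z ∈ L.reverse, P z := by simpa using h
  obtain ⟨A, z, B, e, hp, hA⟩ := l_first this
  refine ⟨B.reverse, z, A.reverse, ?_, hp, by simpa using hA⟩
  have := congrArg List.reverse e
  simpa using this

theorem l_span (P : U → Prop) (L : List U) :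
    ∃ A B, L = A ++ B ∧ (∀ a ∈ A, P a) ∧ ∀ x B', B = x :: B' → ¬ P x := by
  by_cases h : ∃ z ∈ L, ¬ P z
  · obtain ⟨A, z, B, e, hp, hA⟩ := l_first h
    refine ⟨A, z :: B, e, by simpa using hA, ?_⟩
    rintro x B' h
    cases h; exact hp
  · push Not at h
    exact ⟨L, [], by simp, h, by simp⟩

theorem l_uniq {P : U → Prop} {A A' B B' : List U} {b b' : U} (h : A ++ b :: B = A' ++ b' :: B')
    (hA : ∀ a ∈ A, P a) (hA' : ∀ a ∈ A', P a) (hb : ¬ P b) (hb' : ¬ P b') :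
    A = A' ∧ b = b' ∧ B = B' := by
  induction A generalizing A' with
  | nil =>
    cases A' with
    | nil => simpa using h
    | cons a A' =>
      simp at h
      exact absurd (h.1 ▸ hA' a (by simp)) hb
  | cons a A ih =>
    cases A' with
    | nil =>
      simp at h
      exact absurd (h.1 ▸ hA a (by simp)) hb'
    | cons a' A' =>
      simp at h
      have := ih h.2 (fun x hx => hA x (by simp [hx])) (fun x hx => hA' x (by simp [hx]))
      simp [this, h.1]

theorem l_nodup {A A' B B' : List U} {b : U} (n : (A ++ b :: B).Nodup)
    (h : A ++ b :: B = A' ++ b :: B') : A = A' ∧ B = B' := by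
  have n' := n
  rw [h] at n'
  have := l_uniq (P := fun x => x ≠ b) h ?_ ?_ (by simp) (by simp)
  · exact ⟨this.1, this.2.2⟩
  · intro a ha e
    subst e
    have := List.nodup_append.1 n
    exact this.2.2 a ha a (by simp) rfl
  · intro a ha e
    subst e
    have := List.nodup_append.1 n'
    exact this.2.2 a ha a (by simp) rfl

/-! levels -/

theorem lev_congr {i j : ℕ} (h : i % 2 = j % 2) (u : U) : S.lev i u = S.lev j u := by
  unfold lev; rw [h]

theorem lev_le {u : U} {l : List U} (h : S.AP (u :: l)) {i : ℕ} (e : l.length % 2 = i % 2) :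
    S.lev i u ≤ l.length := Nat.sInf_le (Or.inr ⟨e, l, h, rfl⟩)

theorem lev_le_K (i : ℕ) (u : U) : S.lev i u ≤ S.K := Nat.sInf_le (Or.inl rfl)

theorem lev_ex {i : ℕ} {u : U} (h : S.lev i u < S.K) :
    ∃ l, S.Mn u l ∧ l.length = S.lev i u ∧ l.length % 2 = i % 2 := by
  have : S.lev i u ∈ {n | n = S.K ∨ (n % 2 = i % 2 ∧ ∃ l, S.AP (u :: l) ∧ l.length = n)} :=
    Nat.sInf_mem ⟨S.K, Or.inl rfl⟩
  rcases this with h1 | ⟨h1, l, h2, h3⟩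
  · omega
  · refine ⟨l, ⟨h2, ?_⟩, h3, by rw [h3]; exact h1⟩
    conv_lhs => rw [h3]
    exact lev_congr (by rw [h3]; exact h1.symm) u

theorem Mn.le {u : U} {l l' : List U} (h : S.Mn u l) (h' : S.AP (u :: l'))
    (e : l.length % 2 = l'.length % 2) : l.length ≤ l'.length := by
  rw [h.2]; exact lev_le h' e.symm

theorem Mn.lev {u : U} {l : List U} (h : S.Mn u l) {i : ℕ} (e : l.length % 2 = i % 2) :
    S.lev i u = l.length := by
  rw [h.2]; exact lev_congr e.symm u

theorem Mn_of {u : U} {l : List U} (h : S.AP (u :: l)) {i : ℕ} (e : l.length % 2 = i % 2)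
    (hl : l.length ≤ S.lev i u) : S.Mn u l :=
  ⟨h, by rw [lev_congr e]; exact le_antisymm hl (lev_le h e)⟩

theorem ten_eq (i : ℕ) (u : U) : S.ten u = S.lev i u + S.lev (i + 1) u := by
  unfold ten
  rcases Nat.mod_two_eq_zero_or_one i with h | h
  · rw [lev_congr (i := i) (j := 0) (by omega), lev_congr (i := i + 1) (j := 1) (by omega)]
  · rw [lev_congr (i := i) (j := 1) (by omega), lev_congr (i := i + 1) (j := 0) (by omega), add_comm]

/-- even paths end with the mate -/
theorem AP_even {x y : U} {l : List U} (h : S.AP (x :: l)) (e : l.length % 2 = 0) (m : S.Mt x y) :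
    ∃ l', l = y :: l' := by
  cases l with
  | nil => exact absurd (AP_F h) (S.mt_nF m)
  | cons k l =>
    have h' := (AP_cons.1 h).2.1.2.2 (by simp at e; omega)
    exact ⟨l, by rw [S.mt_uniq m (S.mt_symm h')]⟩

theorem AP_up {A : List U} {x y : U} {B : List U} (h : S.AP (A ++ x :: B)) (hA : A ≠ [])
    (e : B.length % 2 = 1) (m : S.Mt x y) : ∃ A', A = A' ++ [y] := by
  obtain ⟨A', a, rfl⟩ : ∃ A' a, A = A' ++ [a] := by
    rcases List.eq_nil_or_concat A with h | ⟨A', a, h⟩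
    · exact absurd h hA
    · exact ⟨A', a, by simpa using h⟩
  rw [List.append_assoc] at h
  have h1 := AP_sub (A := A') (u := a) (B := x :: B) h
  have h2 := (AP_cons.1 h1).2.1.2.2 e
  exact ⟨A', by rw [S.mt_uniq m h2]⟩

theorem AP_odd {y x : U} {l : List U} (h : S.AP (y :: l)) (e : l.length % 2 = 1) (m : S.Mt x y) :
    S.AP (x :: y :: l) := by
  refine AP_cons.2 ⟨h, ⟨S.ad_symm (S.mt_ad m), fun _ => e, fun _ => S.mt_symm m⟩, ?_⟩
  have nd := h.nodup
  intro hx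
  rcases List.mem_cons.1 hx with hx | hx
  · exact S.mt_ne m hx
  · obtain ⟨A, B, rfl⟩ := List.append_of_mem hx
    have h' : S.AP ((y :: A) ++ x :: B) := h
    rcases Nat.mod_two_eq_zero_or_one B.length with p | p
    · obtain ⟨l', rfl⟩ := AP_even (AP_sub h') p m
      simp at nd
    · obtain ⟨A', hA'⟩ := AP_up h' (by simp) p m
      cases A' with
      | nil =>
        simp at hA'
        subst hA'
        simp at e; omega
      | cons c A' =>
        simp at hA'
        rw [hA'.2] at nd
        simp at nd

/-- mates have equal tenacity below the cap -/
theorem mate_lev {x y : U} (m : S.Mt x y) (h : S.lev 1 y < S.K) : S.lev 0 x = S.lev 1 y + 1 := by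
  apply le_antisymm
  · obtain ⟨l, hl, e, p⟩ := lev_ex h
    have := lev_le (AP_odd hl.1 p m) (i := 0) (by simp; omega)
    simp at this; omega
  · by_contra hc
    have hK : S.lev 0 x < S.K := by omega
    obtain ⟨l, hl, e, p⟩ := lev_ex hK
    obtain ⟨l', rfl⟩ := AP_even hl.1 p m
    have := lev_le (AP_cons.1 hl.1).1 (i := 1) (by simp at p; omega)
    simp at e
    omega

theorem mate_lev' {x y : U} (m : S.Mt x y) (h : S.lev 0 x < S.K) : S.lev 0 x = S.lev 1 y + 1 := by
  apply mate_lev m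
  obtain ⟨l, hl, e, p⟩ := lev_ex h
  obtain ⟨l', rfl⟩ := AP_even hl.1 p m
  have := lev_le (AP_cons.1 hl.1).1 (i := 1) (by simp at p; omega)
  simp at e
  omega

theorem mate_ten {x y : U} (m : S.Mt x y) (h : S.ten x < S.K) : S.ten y = S.ten x := by
  unfold ten at *
  have h1 := mate_lev' m (by omega)
  have h2 := mate_lev (S.mt_symm m) (by omega)
  omega

theorem par_of {T : ℕ} (hT : T ≤ S.K) {a z : U} {B : List U} (h : S.AP (a :: z :: B))
    (c : (S.ten a < T ∧ T ≤ S.ten z) ∨ (S.ten z < T ∧ T ≤ S.ten a)) : B.length % 2 = 0 := by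
  by_contra hc
  have m := (AP_cons.1 h).2.1.2.2 (by omega)
  rcases c with c | c
  · have := mate_ten (S.mt_symm m) (by omega); omega
  · have := mate_ten m (by omega); omega

theorem Bs_mate {T : ℕ} (hT : T ≤ S.K) {x y b : U} (m : S.Mt x y) (h : S.Bs T x b) :
    S.Bs T y b := by
  have hx := h.1
  have ht := mate_ten m (by omega)
  refine ⟨by omega, ?_⟩
  intro l hl
  unfold ten at *
  have h1 := mate_lev' m (by omega)
  have h2 := mate_lev (S.mt_symm m) (by omega)
  rcases Nat.mod_two_eq_zero_or_one l.length with p | p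
  · obtain ⟨l', rfl⟩ := AP_even hl.1 p (S.mt_symm m)
    have h3 := hl.lev (i := 0) p
    simp at p h3
    obtain ⟨A, B, e, hA, hb⟩ := h.2 l' (Mn_of (AP_cons.1 hl.1).1 (i := 1) (by omega) (by omega))
    refine ⟨y :: A, B, by simp [e], ?_, hb⟩
    intro a ha
    rcases List.mem_cons.1 ha with rfl | ha
    · omega
    · exact hA a ha
  · have h3 := hl.lev (i := 1) p
    obtain ⟨A, B, e, hA, hb⟩ := h.2 (y :: l)
      (Mn_of (AP_odd hl.1 p m) (i := 0) (by simp; omega) (by simp; omega))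
    cases A with
    | nil =>
      simp at e
      unfold ten at hb
      rw [← e.1] at hb; omega
    | cons a A =>
      simp at e
      exact ⟨A, B, e.2, fun a ha => hA a (by simp [ha]), hb⟩

/-- the first hit of a path `w` with the final part `A ++ [u]` of a path -/
theorem hit {A : List U} {u : U} {B w : List U} (h : S.AP (A ++ u :: B)) (hw : S.AP w)
    (hx : ∃ z ∈ w, z ∈ A ++ [u]) :
    ∃ W1 z W2 A1 A2, w = W1 ++ z :: W2 ∧ A ++ [u] = A1 ++ z :: A2 ∧ (∀ y ∈ W2, y ∉ A ++ [u]) ∧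
      ((W2.length % 2 = (A2.length + B.length) % 2 ∧ S.AP (A1 ++ z :: W2)) ∨
       (W2.length % 2 ≠ (A2.length + B.length) % 2 ∧
        ∃ Y, A2.reverse ++ z :: W2 = u :: Y ∧ Y.length = A2.length + W2.length ∧
          S.AP (u :: Y))) := by
  obtain ⟨W1, z, W2, e, hz, hW⟩ := l_last hx
  obtain ⟨A1, A2, e2⟩ := List.append_of_mem hz
  have hp : A ++ u :: B = A1 ++ z :: (A2 ++ B) := by
    have : A ++ u :: B = (A ++ [u]) ++ B := by simp
    rw [this, e2]; simp
  have hzW : S.AP (z :: W2) := AP_sub (A := W1) (e ▸ hw)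
  refine ⟨W1, z, W2, A1, A2, e, e2, hW, ?_⟩
  rw [hp] at h
  by_cases p : W2.length % 2 = (A2.length + B.length) % 2
  · refine Or.inl ⟨p, AP_cat h hzW (by simp; omega) ?_⟩
    intro a ha h'
    exact hW a h' (by rw [e2]; simp [ha])
  · refine Or.inr ⟨p, ?_⟩
    have := AP_rev (D := A2) (z := z) (B := B) (C := W2) (AP_sub h) hzW ?_ (by intro; omega)
    · rcases List.eq_nil_or_concat A2 with h0 | ⟨A3, a, h0⟩
      · subst h0
        have := List.append_inj' (t₁ := [u]) (t₂ := [z]) e2 rfl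
        simp at this
        refine ⟨W2, by simp [this], by simp, by rw [this.2]; exact hzW⟩
      · have h0' : A2 = A3 ++ [a] := by simpa using h0
        have e3 : A ++ [u] = (A1 ++ z :: A3) ++ [a] := by rw [e2, h0']; simp
        have := (List.append_inj' (t₁ := [u]) (t₂ := [a]) e3 rfl).2
        simp at this
        subst this
        refine ⟨A3.reverse ++ z :: W2, by simp [h0'], by simp [h0']; omega, ?_⟩
        simpa [h0'] using ‹S.AP (A2.reverse ++ z :: W2)›
    · intro a ha h'
      exact hW a h' (by rw [e2]; simp [ha])

theorem headMn {v : U} {l A : List U} {z : U} {R W : List U} (hl : S.Mn v l)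
    (e : v :: l = A ++ z :: R) (h : S.AP (A ++ z :: W)) (p : W.length % 2 = R.length % 2) :
    R.length ≤ W.length := by
  cases A with
  | nil =>
    simp at e h
    obtain ⟨rfl, rfl⟩ := e
    exact hl.le h p.symm
  | cons a A =>
    simp at e h
    obtain ⟨rfl, rfl⟩ := e
    have := hl.le h (by simp; omega)
    simp at this; omega

/-- limited BFS-honesty -/
theorem honest {v : U} {l A : List U} {u : U} {B : List U} (hl : S.Mn v l) (e : v :: l = A ++ u :: B)
    (hv : S.ten v < S.K) (ht : S.ten v ≤ S.ten u) : S.Mn u B := by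
  have hp : S.AP (A ++ u :: B) := e ▸ hl.1
  have hlen : l.length = A.length + B.length := by
    have := congrArg List.length e
    simp at this; omega
  refine Mn_of (AP_sub hp) rfl ?_
  by_contra hc
  push Not at hc
  have hl2 := hl.lev (i := l.length) rfl
  have hK := S.lev_le_K l.length v
  obtain ⟨Q, hQ, q1, q2⟩ := lev_ex (S := S) (i := B.length) (u := u) (by omega)
  have e' : ∀ (A1 : List U) (z : U) (A2 : List U), A ++ [u] = A1 ++ z :: A2 →
      v :: l = A1 ++ z :: (A2 ++ B) := by
    intro A1 z A2 h
    have : A ++ u :: B = (A ++ [u]) ++ B := by simp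
    rw [e, this, h]; simp
  have hv2 := S.ten_eq l.length v
  have hu2 := S.ten_eq B.length u
  obtain ⟨R, hR, r1, r2⟩ := lev_ex (S := S) (i := l.length + 1) (u := v) (by omega)
  obtain ⟨W1, z, W2, A1, A2, w1, w2, w3, w4⟩ := hit hp hQ.1 ⟨u, by simp, by simp⟩
  have c1 := congrArg List.length w1
  have c2 := congrArg List.length w2
  simp at c1 c2
  rcases w4 with ⟨p, w4⟩ | ⟨p, Y, w4, w5, w6⟩
  · have := headMn hl (e' _ _ _ w2) w4 (by simp; omega)
    simp at this; omega
  have d1 := lev_le w6 (i := B.length + 1) (by omega)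
  have hvA : v ∈ A ++ [u] := by
    cases A with
    | nil => simp at e; simp [e.1]
    | cons a A => simp at e; simp [e.1]
  obtain ⟨W1', z', W2', A1', A2', w1', w2', w3', w4'⟩ := hit hp hR.1 ⟨v, by simp, hvA⟩
  have c1' := congrArg List.length w1'
  have c2' := congrArg List.length w2'
  simp at c1' c2'
  rcases w4' with ⟨p', w4'⟩ | ⟨p', Y', w4', w5', w6'⟩
  · have := headMn hl (e' _ _ _ w2') w4' (by simp; omega)
    simp at this; omega
  · have d2 := lev_le w6' (i := B.length + 1) (by omega)
    omega

theorem Bs_uniq {T : ℕ} (hT : T ≤ S.K) {u b c : U} (h : S.Bs T u b) (h' : S.Bs T u c) : b = c := by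
  have h1 := h.1
  unfold ten at h1
  obtain ⟨l, hl, _, _⟩ := lev_ex (S := S) (i := 0) (u := u) (by omega)
  obtain ⟨A, B, e, hA, hb⟩ := h.2 l hl
  obtain ⟨A', B', e', hA', hb'⟩ := h'.2 l hl
  exact (l_uniq (P := fun a => S.ten a < T) (e.symm.trans e') hA hA' (by omega) (by omega)).2.1

theorem Bs_Mn {T : ℕ} (hT : T ≤ S.K) {u b : U} (h : S.Bs T u b) {l : List U} (hl : S.Mn u l) :
    ∃ A B, u :: l = A ++ b :: B ∧ (∀ a ∈ A, S.ten a < T) ∧ T ≤ S.ten b ∧ S.Mn b B ∧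
      B.length % 2 = 0 ∧ l.length = A.length + B.length ∧ A ≠ [] := by
  obtain ⟨A, B, e, hA, hb⟩ := h.2 l hl
  have h1 := h.1
  have hn : A ≠ [] := by
    rintro rfl
    simp at e
    rw [← e.1] at hb; omega
  have hlen : l.length = A.length + B.length := by
    have := congrArg List.length e
    simp at this; omega
  refine ⟨A, B, e, hA, hb, honest hl e (by omega) (by omega), ?_, hlen, hn⟩
  rcases List.eq_nil_or_concat A with h0 | ⟨A3, a, h0⟩
  · exact absurd h0 hn
  · have h0' : A = A3 ++ [a] := by simpa using h0
    subst h0'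
    have hp : S.AP (A3 ++ a :: b :: B) := by
      have := hl.1
      rw [e] at this; simpa using this
    exact par_of hT (AP_sub hp) (Or.inl ⟨hA a (by simp), hb⟩)

/-- lower bound on the length of any path to `u` -/
theorem Bs_len {T : ℕ} (hT : T ≤ S.K) {u b : U} (h : S.Bs T u b) {l : List U} (hl : S.AP (u :: l)) :
    S.lev 0 b + 1 ≤ l.length := by
  have h1 := h.1
  have h2 := S.ten_eq l.length u
  obtain ⟨m, hm, m1, m2⟩ := lev_ex (S := S) (i := l.length) (u := u) (by omega)
  have h3 := hm.le hl m2
  obtain ⟨A, B, e, hA, hb, hB, p, q, n⟩ := Bs_Mn hT h hm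
  have := hB.lev (i := 0) p
  have := List.length_pos_iff.2 n
  omega

theorem Bs_ge {T : ℕ} (hT : T ≤ S.K) {u b : U} (h : S.Bs T u b) : T ≤ S.ten b := by
  have h1 := h.1
  unfold ten at h1
  obtain ⟨m, hm, m1, m2⟩ := lev_ex (S := S) (i := 0) (u := u) (by omega)
  obtain ⟨A, B, e, hA, hb, _⟩ := Bs_Mn hT h hm
  exact hb

theorem Bs_trans {T T' : ℕ} (hT : T ≤ S.K) (hTT : T' ≤ T) {u b c : U} (h : S.Bs T' u b)
    (h' : S.BB T b c) : S.Bs T u c := by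
  refine ⟨lt_of_lt_of_le h.1 hTT, ?_⟩
  intro l hl
  obtain ⟨A, B, e, hA, hb, hB, _⟩ := Bs_Mn (by omega) h hl
  rcases h' with h' | ⟨h', rfl⟩
  · obtain ⟨A', B', e', hA', hb'⟩ := h'.2 B hB
    refine ⟨A ++ A', B', by rw [e, e']; simp, ?_, hb'⟩
    intro a ha
    rcases List.mem_append.1 ha with ha | ha
    · exact lt_of_lt_of_le (hA a ha) hTT
    · exact hA' a ha
  · exact ⟨A, B, e, fun a ha => lt_of_lt_of_le (hA a ha) hTT, h'⟩

theorem Bs_exists (hB : ∀ u, S.ten u < S.K → ∃ b, S.Bs (S.ten u + 1) u b)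
    {T : ℕ} (hT : T ≤ S.K) : ∀ (n : ℕ) (u : U), T - S.ten u ≤ n → S.ten u < T → ∃ b, S.Bs T u b := by
  intro n
  induction n with
  | zero => intro u h1 h2; omega
  | succ n ih =>
    intro u h1 h2
    obtain ⟨b, hb⟩ := hB u (by omega)
    have h3 := Bs_ge (by omega) hb
    by_cases h4 : S.ten b < T
    · obtain ⟨c, hc⟩ := ih b (by omega) h4
      exact ⟨c, Bs_trans hT (by omega) hb (Or.inl hc)⟩
    · exact ⟨b, Bs_trans hT (by omega) hb (Or.inr ⟨by omega, rfl⟩)⟩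

end Sys

namespace Sys

variable {U : Type*} {S : Sys U}

variable (S) in
def DT (T : ℕ) : Prop := ∀ x l b A B, S.Mn x l → S.ten x < T → x :: l = A ++ b :: B →
  (∀ a ∈ A, S.ten a < T) → T ≤ S.ten b → ∀ a ∈ A, S.Bs T a b

variable (S) in
def XA (T s : ℕ) : Prop := ∀ x x' b b', S.St 0 x x' → S.lev 0 x + S.lev 0 x' + 1 < s →
  S.BB T x b → S.BB T x' b' → b = b'

variable (S) in
def HB : Prop := ∀ u, S.ten u < S.K → ∃ b, S.Bs (S.ten u + 1) u b

variable (S) in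
def HF : Prop := ∀ f l, S.F f → S.AP (f :: l) → l.length % 2 = 1 → S.K ≤ l.length

theorem Bs_ex (hB : S.HB) {T : ℕ} (hT : T ≤ S.K) {u : U} (h : S.ten u < T) : ∃ b, S.Bs T u b :=
  Bs_exists hB hT _ u le_rfl h

theorem BB_ex (hB : S.HB) {T : ℕ} (hT : T ≤ S.K) (u : U) : ∃ b, S.BB T u b := by
  by_cases h : S.ten u < T
  · obtain ⟨b, hb⟩ := Bs_ex hB hT h
    exact ⟨b, Or.inl hb⟩
  · exact ⟨u, Or.inr ⟨by omega, rfl⟩⟩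

theorem BB_uniq {T : ℕ} (hT : T ≤ S.K) {u b c : U} (h : S.BB T u b) (h' : S.BB T u c) : b = c := by
  rcases h with h | ⟨h, rfl⟩ <;> rcases h' with h' | ⟨h', rfl⟩
  · exact Bs_uniq hT h h'
  · have := h.1; omega
  · have := h'.1; omega
  · rfl

/-- walking down a path next to a base class -/
theorem desc {T s : ℕ} (hT : T ≤ S.K) (hB : S.HB) (hX : S.XA T s) (D : List U) :
    ∀ (g : U) (W B' : List U) (c : U), S.AP (g :: (D ++ B')) → S.AP (g :: W) → (∀ a ∈ D, a ∉ W) →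
    (W.length + D.length + B'.length) % 2 = 1 → W.length + D.length + B'.length < s →
    S.Bs T g c → (∃ D1 D2, D = D1 ++ c :: D2 ∧ ∀ k ∈ D1, S.Bs T k c) ∨ ∀ k ∈ D, S.Bs T k c := by
  induction D with
  | nil => intros; right; simp
  | cons k D ih =>
    intro g W B' c h hW d p hs hg
    have h' := AP_cons.1 h
    have nd := h.nodup
    simp only [List.length_cons] at p hs
    have hk : k = c ∨ S.Bs T k c := by
      by_cases e : (D ++ B').length % 2 = 1
      · right
        exact Bs_mate hT (S.mt_symm (h'.2.1.2.2 e)) hg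
      · simp at e
        obtain ⟨c', hc'⟩ := BB_ex hB hT k
        have h1 := lev_le hW (i := 0) (by omega)
        have h2 := lev_le h'.1 (i := 0) (by simp; omega)
        simp at h2
        have := hX k g c' c (h'.2.1.par (by simp; omega)) (by omega) hc' (Or.inl hg)
        subst this
        rcases hc' with hc' | hc'
        · exact Or.inr hc'
        · exact Or.inl hc'.2.symm
    rcases hk with hk | hk
    · subst hk
      exact Or.inl ⟨[], D, rfl, by simp⟩
    · have hst : S.St W.length g k := h'.2.1.symm.par (by simp; omega)
      have hW' : S.AP (k :: g :: W) := by
        refine AP_cons.2 ⟨hW, hst, ?_⟩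
        have := d k (by simp)
        simp at nd ⊢
        refine ⟨fun e => nd.1.1 e.symm, this⟩
      have hd : ∀ a ∈ D, a ∉ g :: W := by
        intro a ha
        have := d a (by simp [ha])
        simp at nd ⊢
        refine ⟨?_, this⟩
        rintro rfl
        exact nd.1.2.1 ha
      rcases ih k (g :: W) B' c h'.1 hW' hd (by simp; omega) (by simp; omega) hk with ⟨D1, D2, e, r⟩ | r
      · left
        refine ⟨k :: D1, D2, by simp [e], ?_⟩
        simpa using ⟨hk, r⟩
      · right
        simpa using ⟨hk, r⟩

theorem edge_in {T : ℕ} {x x' : U} {Q' : List U} (hst : S.St 0 x x') (hx : T ≤ S.ten x)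
    (h : S.AP (x' :: Q')) (p : Q'.length % 2 = 0) (hs : S.lev 0 x + Q'.length + 1 < T) (ne : x ≠ x') :
    ∃ Q1 Q2, Q' = Q1 ++ x :: Q2 ∧ Q2.length % 2 = 0 := by
  unfold ten at hx
  by_cases hm : x ∈ Q'
  · obtain ⟨Q1, Q2, rfl⟩ := List.append_of_mem hm
    refine ⟨Q1, Q2, rfl, ?_⟩
    by_contra hc
    have := lev_le (AP_sub (A := x' :: Q1) (by simpa using h)) (i := 1) (by omega)
    simp at hs
    omega
  · have : S.AP (x :: x' :: Q') := AP_cons.2 ⟨h, hst.symm.par (by omega), by simp [ne, hm]⟩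
    have := lev_le this (i := 1) (by simp; omega)
    simp at this
    omega

theorem xhigh {T : ℕ} (hT : T ≤ S.K) {x x' : U} (hst : S.St 0 x x') (hx : T ≤ S.ten x)
    (hs : S.lev 0 x + S.lev 0 x' + 1 < T) (ne : x ≠ x') (hle : S.lev 0 x' ≤ S.lev 0 x) : False := by
  obtain ⟨Q, hQ, q1, q2⟩ := lev_ex (S := S) (i := 0) (u := x') (by omega)
  obtain ⟨Q1, Q2, rfl, e⟩ := edge_in hst hx hQ.1 (by omega) (by omega) ne
  have := lev_le (AP_sub (A := x' :: Q1) (by simpa using hQ.1)) (i := 0) (by omega)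
  simp at q1
  omega

theorem xhalf {T : ℕ} (hT : T ≤ S.K) {x x' b' : U} (hst : S.St 0 x x') (hx : T ≤ S.ten x)
    (hs : S.lev 0 x + S.lev 0 x' + 1 < T) (ne : x ≠ x') (hb : S.Bs T x' b') : x = b' := by
  by_contra hne
  obtain ⟨Q, hQ, q1, q2⟩ := lev_ex (S := S) (i := 0) (u := x') (by omega)
  obtain ⟨Q1, Q2, rfl, e⟩ := edge_in hst hx hQ.1 (by omega) (by omega) ne
  obtain ⟨A, B, e', hA, hb', hB', p, q, n⟩ := Bs_Mn hT hb hQ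
  have nd := hQ.1.nodup
  have h1 : S.AP (x' :: x :: Q2) := by
    refine AP_cons.2 ⟨AP_sub (A := x' :: Q1) (by simpa using hQ.1), hst.par (by omega), ?_⟩
    simp at nd ⊢
    tauto
  have h2 := Bs_len hT hb h1
  rw [hB'.lev (by omega)] at h2
  have hxB : x ∈ B := by
    have : x ∈ A ++ b' :: B := by rw [← e']; simp
    simp at this
    rcases this with h | h | h
    · have := hA x h; omega
    · exact absurd h hne
    · exact h
  obtain ⟨B1, B2, rfl⟩ := List.append_of_mem hxB
  have := (l_nodup (A := x' :: Q1) (A' := A ++ b' :: B1) (B := Q2) (B' := B2) (b := x)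
    (by simpa using nd) (by simpa using e')).2
  subst this
  simp at h2
  omega

theorem xin {T : ℕ} (hT : T ≤ S.K) {b b' x' : U} {Q' A' B' : List U} (hb : T ≤ S.ten b)
    (h : S.AP (x' :: Q')) (e : x' :: Q' = A' ++ b' :: B') (hA : ∀ a ∈ A', S.ten a < T)
    (hs : S.lev 0 b + Q'.length + 1 < T) (hm : S.Mn b' B') (p : B'.length % 2 = 0) (ne : b ≠ b')
    (hi : b ∈ x' :: Q') : S.lev 0 b < S.lev 0 b' := by
  rw [e] at hi
  simp at hi
  rcases hi with h1 | h1 | h1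
  · have := hA b h1; omega
  · exact absurd h1 ne
  · obtain ⟨B1, B2, rfl⟩ := List.append_of_mem h1
    have hp : S.AP (b :: B2) := AP_sub (A := A' ++ b' :: B1) (by
      have := h; rw [e] at this; simpa using this)
    have hl := congrArg List.length e
    simp at hl
    rw [hm.lev (i := 0) (by omega)]
    rcases Nat.mod_two_eq_zero_or_one B2.length with c | c
    · have := lev_le hp (i := 0) (by omega)
      simp; omega
    · have := lev_le hp (i := 1) (by omega)
      unfold ten at hb
      omega

end Sys

namespace Sys

variable {U : Type*} {S : Sys U}

theorem l_concat {A : List U} (h : A ≠ []) : ∃ A' a, A = A' ++ [a] := by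
  rcases List.eq_nil_or_concat A with h' | ⟨A', a, h'⟩
  · exact absurd h' h
  · exact ⟨A', a, by simpa using h'⟩

theorem xmain {T s : ℕ} (hT : T ≤ S.K) (hB : S.HB) (hF : S.HF) (hD : S.DT T) (hX : S.XA T s)
    {x x' b b' : U} {Q Q' : List U} (hst : S.St 0 x x') (hx : S.Bs T x b) (hx' : S.Bs T x' b')
    (hQ : S.Mn x Q) (p : Q.length % 2 = 0) (hQ' : S.Mn x' Q') (p' : Q'.length % 2 = 0)
    (hs : Q.length + Q'.length + 1 ≤ s) (hsT : Q.length + Q'.length + 1 < T) (hne : b ≠ b')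
    (hnb : b ∉ x' :: Q') : False := by
  obtain ⟨A, B, e, hA, hb, hBm, pB, qB, nA⟩ := Bs_Mn hT hx hQ
  have lb : S.lev 0 b = B.length := hBm.lev (by omega)
  have step1 : ∃ z ∈ x' :: Q', S.Bs T z b := by
    by_contra hc
    push Not at hc
    have hAd : ∀ a ∈ A, a ∉ x' :: Q' := fun a ha h =>
      hc a h (hD x Q b A B hQ hx.1 e hA hb a ha)
    obtain ⟨y, A1, rfl⟩ := List.exists_cons_of_ne_nil nA
    simp at e
    obtain ⟨rfl, rfl⟩ := e
    have h1 : S.AP (x :: x' :: Q') := AP_cons.2 ⟨hQ'.1, hst.symm.par (by omega), hAd x (by simp)⟩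
    have h2 := AP_rev (z := x) (D := A1 ++ [b]) (B := B) (C := x' :: Q')
      (by simpa using hQ.1) h1 (by
        intro a ha
        simp only [List.mem_append, List.mem_singleton] at ha
        rcases ha with ha | rfl
        · exact hAd a (by simp [ha])
        · exact hnb) (by intro _; simp at p ⊢; omega)
    simp at h2
    simp at p qB hsT
    have := lev_le h2 (i := 1) (by simp; omega)
    simp at this
    unfold ten at hb
    omega
  obtain ⟨C1, h, C2, eC, hh, hC1⟩ := l_first step1
  have hq' : S.AP (C1 ++ h :: C2) := eC ▸ hQ'.1
  have lenC : Q'.length = C1.length + C2.length := by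
    have := congrArg List.length eC
    simp at this; omega
  have nC1 : C1 ≠ [] := by
    rintro rfl
    simp at eC
    rw [← eC.1] at hh
    exact hne (Bs_uniq hT hh hx')
  have pC2 : C2.length % 2 = 0 := by
    by_contra hc
    obtain ⟨Z, a, rfl⟩ := l_concat nC1
    have : S.AP (a :: h :: C2) := AP_sub (A := Z) (by simpa using hq')
    have m := (AP_cons.1 this).2.1.2.2 (by omega)
    exact hC1 a (by simp) (Bs_mate hT m hh)
  have hh1 := hh.1
  obtain ⟨Qh, hQh, qh1, qh2⟩ := lev_ex (S := S) (i := 0) (u := h) (by unfold ten at hh1; omega)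
  obtain ⟨D, E, eD, hDt, _, hE, pE, qE, nD⟩ := Bs_Mn hT hh hQh
  have hDB := hD h Qh b D E hQh hh.1 eD hDt hb
  have hbC : b ∉ C1 ++ h :: C2 := eC ▸ hnb
  have hlt : Qh.length < C2.length := by
    have hle := hQh.le (AP_sub hq') (by omega)
    by_contra hc
    have : S.Mn h C2 := Mn_of (AP_sub hq') (i := 0) (by omega) (by omega)
    obtain ⟨A3, B3, e3, _⟩ := Bs_Mn hT hh this
    apply hbC
    rw [e3]; simp
  by_cases hg : ∃ g ∈ Qh, g ∈ C1
  swap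
  · push Not at hg
    have := AP_cat hq' hQh.1 (by omega) (fun a ha hm => hg a hm ha)
    have := headMn hQ' eC this (by omega)
    omega
  obtain ⟨W1, g, W2, eW, gC, hW⟩ := l_last hg
  obtain ⟨C11, C12, rfl⟩ := List.append_of_mem gC
  have hgW : S.AP (g :: W2) := AP_sub (A := h :: W1) (by have := hQh.1; rw [eW] at this; exact this)
  have hq2 : S.AP (C11 ++ g :: (C12 ++ h :: C2)) := by simpa using hq'
  have lW : Qh.length = W1.length + 1 + W2.length := by rw [eW]; simp; omega
  simp at lenC
  by_cases par : W2.length % 2 = (C12 ++ h :: C2).length % 2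
  · have h1 := AP_cat hq2 hgW par.symm (fun a ha hm => hW a hm (by simp [ha]))
    have := headMn hQ' (by simpa using eC) h1 par
    simp at this
    omega
  simp at par
  have hgb : ¬ S.Bs T g b := hC1 g (by simp)
  have gE : g ∈ E := by
    have : g ∈ D ++ b :: E := by rw [← eD, eW]; simp
    simp at this
    rcases this with h1 | h1 | h1
    · exact absurd (hDB g h1) hgb
    · subst h1; exact absurd (by simp) hbC
    · exact h1
  obtain ⟨E1, E2, rfl⟩ := List.append_of_mem gE
  have ndh := hQh.1.nodup
  have : E2 = W2 := by
    refine (l_nodup (A := D ++ b :: E1) (A' := h :: W1) (b := g) ?_ ?_).2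
    · have := ndh; rw [eD] at this; simpa using this
    · have := eD.symm; rw [eW] at this; simpa using this
  subst this
  have lE : S.lev 0 b = E1.length + 1 + E2.length := by
    rw [hE.lev (by omega)]; simp; omega
  have pW : E2.length % 2 = 1 := by
    by_contra hc
    cases E2 with
    | nil =>
      have hFg := AP_F hgW
      have := hF g _ hFg (AP_sub hq2) (by simp at par ⊢; omega)
      simp at this
      omega
    | cons m W3 =>
      simp at hc par
      have mt := (AP_cons.1 hgW).2.1.2.2 (by omega)
      have n11 : C11 ≠ [] := by
        rintro rfl
        simp at lenC
        omega
      obtain ⟨Z, rfl⟩ := AP_up hq2 n11 (by simp; omega) (S.mt_symm mt)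
      exact hW m (by simp) (by simp)
  have hgl := lev_le (AP_sub hq2) (i := 0) (by simp; omega)
  have hgl1 := lev_le hgW (i := 1) (by omega)
  simp at hgl
  have htg : S.ten g < T := by unfold ten; omega
  obtain ⟨c, hc⟩ := Bs_ex hB hT htg
  have hr := desc hT hB hX (C12 ++ [h]) g E2 C2 c (by simpa using AP_sub hq2) hgW (by
      intro a ha hm
      simp only [List.mem_append, List.mem_singleton] at ha
      rcases ha with ha | rfl
      · exact hW a hm (by simp [ha])
      · simp at ndh
        exact ndh.1 (by rw [eW]; simp [hm])) (by simp; omega) (by simp; omega) hc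
  rcases hr with ⟨D1, D2, e1, r⟩ | r
  · have hct := Bs_ge hT hc
    have nD2 : D2 ≠ [] := by
      rintro rfl
      have := (List.append_inj' e1 rfl).2
      simp at this
      rw [this] at hh1
      omega
    obtain ⟨D3, a, rfl⟩ := l_concat nD2
    have e1' : C12 ++ [h] = (D1 ++ c :: D3) ++ [a] := by simpa using e1
    obtain ⟨rfl, ea⟩ := List.append_inj' e1' rfl
    have e3 : x' :: Q' = (C11 ++ g :: D1) ++ c :: (D3 ++ h :: C2) := by simpa using eC
    have hx1 := hx'.1
    have hcm := honest hQ' e3 (by omega) (by omega)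
    obtain ⟨Z, a', ea'⟩ := l_concat (A := g :: D1) (by simp)
    have hta : S.ten a' < T := by
      have : a' ∈ g :: D1 := by rw [ea']; simp
      simp at this
      rcases this with rfl | this
      · exact htg
      · exact (r a' this).1
    have hpp : S.AP (a' :: c :: (D3 ++ h :: C2)) := by
      have h4 := hQ'.1
      rw [e3, ea'] at h4
      exact AP_sub (A := C11 ++ Z) (by simpa using h4)
    have pc := par_of hT hpp (Or.inl ⟨hta, hct⟩)
    have lc := hcm.lev (i := 0) (by omega)
    have := Bs_len hT hc hgW
    simp at lc
    omega
  · have := r h (by simp)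
    have := Bs_uniq hT this hh
    subst this
    exact hgb hc

theorem X_all {T : ℕ} (hT : T ≤ S.K) (hB : S.HB) (hF : S.HF) (hD : S.DT T) :
    ∀ s, s ≤ T → S.XA T s := by
  intro s
  induction s with
  | zero => intro _ x x' b b' _ h; omega
  | succ s ih =>
    intro hs x x' b b' hst h1 hb hb'
    have hX := ih (by omega)
    by_cases ne : x = x'
    · subst ne; exact BB_uniq hT hb hb'
    have ne' : x' ≠ x := fun e => ne e.symm
    rcases hb with hb | ⟨hb, rfl⟩ <;> rcases hb' with hb' | ⟨hb', rfl⟩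
    · by_contra hne
      obtain ⟨Q, hQ, q1, q2⟩ := lev_ex (S := S) (i := 0) (u := x) (by omega)
      obtain ⟨Q', hQ', q1', q2'⟩ := lev_ex (S := S) (i := 0) (u := x') (by omega)
      by_cases c1 : b ∈ x' :: Q'
      · by_cases c2 : b' ∈ x :: Q
        · obtain ⟨A, B, e, hA, hbt, hBm, pB, qB, nA⟩ := Bs_Mn hT hb hQ
          obtain ⟨A', B', e', hA', hbt', hBm', pB', qB', nA'⟩ := Bs_Mn hT hb' hQ'
          have lb := hBm.lev (i := 0) (by omega)
          have lb' := hBm'.lev (i := 0) (by omega)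
          have := xin hT hbt hQ'.1 e' hA' (by omega) hBm' (by omega) hne c1
          have := xin hT hbt' hQ.1 e hA (by omega) hBm (by omega) (fun h => hne h.symm) c2
          omega
        · exact xmain hT hB hF hD hX hst.symm hb' hb hQ' (by omega) hQ (by omega) (by omega)
            (by omega) (fun h => hne h.symm) c2
      · exact xmain hT hB hF hD hX hst hb hb' hQ (by omega) hQ' (by omega) (by omega)
            (by omega) hne c1
    · exact (xhalf hT hst.symm hb' (by omega) ne' hb).symm
    · exact xhalf hT hst hb (by omega) ne hb'
    · rcases le_total (S.lev 0 b') (S.lev 0 b) with c | c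
      · exact (xhigh hT hst hb (by omega) ne c).elim
      · exact (xhigh hT hst.symm hb' (by omega) ne' c).elim

end Sys

namespace Sys

variable {U : Type*} {S : Sys U}

theorem Seg {s : ℕ} (hs : s < S.K) (hB : S.HB) (hF : S.HF) (hD : S.DT s) {v u b : U} {l A B : List U}
    (hl : S.Mn v l) (hv : S.ten v = s) (e : v :: l = A ++ b :: B) (hA : ∀ a ∈ A, S.ten a ≤ s)
    (hb : s < S.ten b) (hu : u ∈ A) (hut : S.ten u < s) :
    ∃ y m A' γ C, S.Mn y m ∧ S.ten y < s ∧ y :: m = A' ++ γ :: C ∧ (∀ a ∈ A', S.ten a < s) ∧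
      s ≤ S.ten γ ∧ u ∈ A' ∧ (γ ∈ A ∨ γ = b) ∧ ∀ a ∈ A', a ∈ A := by
  have hX := X_all (le_of_lt hs) hB hF hD s le_rfl
  obtain ⟨A0, A3, rfl⟩ := List.append_of_mem hu
  have hA0 : ∃ z ∈ A0, s ≤ S.ten z := by
    cases A0 with
    | nil => simp at e; rw [← e.1] at hut; omega
    | cons z A0 => simp at e; exact ⟨z, by simp, by rw [← e.1]; omega⟩
  obtain ⟨A1, ω, M0, rfl, hω, hM0⟩ := l_last hA0
  obtain ⟨M3, α, R, eR, hα, hM3⟩ := l_first (P := fun z => s ≤ S.ten z) (L := A3 ++ [b])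
    ⟨b, by simp, by omega⟩
  obtain ⟨Mid, hMid⟩ : ∃ Mid, Mid = M0 ++ u :: M3 := ⟨_, rfl⟩
  obtain ⟨B', hB'⟩ : ∃ B', B' = R ++ B := ⟨_, rfl⟩
  have e2 : v :: l = A1 ++ ω :: (Mid ++ α :: B') := by
    rw [e, hMid, hB']
    have : A3 ++ b :: B = M3 ++ α :: (R ++ B) := by
      have := congrArg (· ++ B) eR
      simpa using this
    simp [this]
  have hMs : ∀ a ∈ Mid, S.ten a < s := by
    intro a ha
    rw [hMid] at ha
    simp at ha
    rcases ha with h | rfl | h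
    · have := hM0 a h; omega
    · exact hut
    · have := hM3 a h; omega
  have hαA : α ∈ (A1 ++ ω :: M0) ++ u :: A3 ∨ α = b := by
    have : α ∈ A3 ++ [b] := by rw [eR]; simp
    simp at this
    rcases this with h | h
    · left; simp [h]
    · right; exact h
  have hMA : ∀ a ∈ Mid, a ∈ (A1 ++ ω :: M0) ++ u :: A3 := by
    intro a ha
    rw [hMid] at ha
    simp only [List.mem_append, List.mem_cons] at ha
    rcases ha with h | rfl | h
    · simp [h]
    · simp
    · have h1 : a ∈ A3 ++ [b] := by rw [eR]; simp [h]
      have h2 := hM3 a h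
      simp only [List.mem_append, List.mem_singleton] at h1
      rcases h1 with h1 | rfl
      · simp [h1]
      · omega
  have huM : u ∈ Mid := by rw [hMid]; simp
  clear hMid hB' hM3 eR hM0 hA0
  have hωt : S.ten ω = s := le_antisymm (hA ω (by simp)) hω
  have hωm := honest hl e2 (by omega) (by omega)
  have nd := hωm.1.nodup
  have hodd : (Mid ++ α :: B').length % 2 = 1 := by
    cases Mid with
    | nil => simp at huM
    | cons z Mid =>
      have := par_of (T := s) (by omega) hωm.1 (Or.inr ⟨hMs z (by simp), hω⟩)
      simp at this ⊢; omega
  have hω1 := hωm.lev (i := 1) (by omega)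
  have hω0 : S.lev 0 ω + S.lev 1 ω = s := hωt
  obtain ⟨Lω, hL, L1, L2⟩ := lev_ex (S := S) (i := 0) (u := ω) (by omega)
  obtain ⟨M1, M2, rfl, hM1, hM2⟩ := l_span (fun z => S.Bs s z ω) Mid
  obtain ⟨x, rest, hx⟩ : ∃ x rest, M2 ++ α :: B' = x :: rest := by
    cases M2 with
    | nil => exact ⟨_, _, rfl⟩
    | cons x M2 => exact ⟨_, _, rfl⟩
  have hpx : S.AP (ω :: (M1 ++ x :: rest)) := by
    rw [← hx]; simpa using hωm.1
  have hlen : (M1 ++ M2 ++ α :: B').length = M1.length + 1 + rest.length := by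
    rw [List.append_assoc, hx]; simp; omega
  have hnB : ¬ S.Bs s x ω := by
    intro h
    cases M2 with
    | nil =>
      simp at hx
      have := h.1
      rw [← hx.1] at this; omega
    | cons y M2 =>
      simp at hx
      obtain ⟨rfl, _⟩ := hx
      exact hM2 y M2 rfl h
  obtain ⟨c, hc⟩ := BB_ex hB (T := s) (by omega) x
  have hcω : c ≠ ω := by
    rintro rfl
    rcases hc with hc | ⟨_, rfl⟩
    · exact hnB hc
    · have := hpx.nodup
      simp at this
  -- the vertex above x
  have hM1d : ∀ a ∈ M1, a ∉ Lω := by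
    intro a ha hm
    obtain ⟨W1, W2, rfl⟩ := List.append_of_mem hm
    have h1 := Bs_len (by omega) (hM1 a ha) (AP_sub (A := ω :: W1) (by simpa using hL.1))
    simp at L1
    omega
  obtain ⟨x', m', Z, e1', e2', hx'⟩ : ∃ x' m' Z, ω :: M1 = Z ++ [x'] ∧
      M1.reverse ++ ω :: Lω = x' :: m' ∧ ((x' = ω ∧ M1 = []) ∨ x' ∈ M1) := by
    by_cases h : M1 = []
    · subst h
      exact ⟨ω, Lω, [], rfl, rfl, Or.inl ⟨rfl, rfl⟩⟩
    · obtain ⟨Z, x', rfl⟩ := l_concat h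
      exact ⟨x', Z.reverse ++ ω :: Lω, ω :: Z, by simp, by simp, Or.inr (by simp)⟩
  have hm'l : m'.length = M1.length + Lω.length := by
    have := congrArg List.length e2'
    simp at this; omega
  have hedge : S.AP (x' :: x :: rest) := by
    have h1 : ω :: (M1 ++ x :: rest) = Z ++ x' :: x :: rest := by
      rw [← List.cons_append, e1']; simp
    rw [h1] at hpx
    exact AP_sub hpx
  have hBBx' : S.BB s x' ω := by
    rcases hx' with ⟨rfl, _⟩ | h
    · exact Or.inr ⟨hω, rfl⟩
    · exact Or.inl (hM1 x' h)
  have hre : rest.length % 2 = 0 := by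
    by_contra hcon
    have m := (AP_cons.1 hedge).2.1.2.2 (by omega)
    rcases hx' with ⟨rfl, rfl⟩ | h
    · have hxt : S.ten x < s := by
        cases M2 with
        | nil => simp at huM
        | cons y M2 =>
          simp at hx
          exact hMs x (by simp [hx.1])
      have := mate_ten m (by omega)
      omega
    · exact hnB (Bs_mate (by omega) (S.mt_symm m) (hM1 x' h))
  have hm' : S.AP (x' :: m') := by
    rw [← e2']
    exact AP_rev (z := ω) (D := M1) (B := x :: rest) (C := Lω) hpx hL.1 hM1d (by
      intro _; simp; omega)
  have l1 := lev_le (AP_cons.1 hedge).1 (i := 0) (by omega)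
  have l2 := lev_le hm' (i := 0) (by omega)
  have l3 : ¬ (S.lev 0 x + S.lev 0 x' + 1 < s) := fun h =>
    hcω (hX x x' c ω ((AP_cons.1 hedge).2.1.par (by omega)) h hc hBBx')
  have mn1 : S.Mn x rest := Mn_of (AP_cons.1 hedge).1 (i := 0) (by omega) (by omega)
  have mn2 : S.Mn x' m' := Mn_of hm' (i := 0) (by omega) (by omega)
  rcases List.mem_append.1 huM with h | h
  · refine ⟨x', m', M1.reverse, ω, Lω, mn2, ?_, e2'.symm, ?_, hω, by simpa using h, Or.inl (by simp), ?_⟩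
    · rcases hx' with ⟨_, rfl⟩ | h'
      · simp at h
      · exact hMs x' (by simp [h'])
    · intro a ha; exact hMs a (by simp at ha; simp [ha])
    · intro a ha; exact hMA a (by simp at ha; simp [ha])
  · refine ⟨x, rest, M2, α, B', mn1, ?_, hx.symm, ?_, hα, h, hαA, ?_⟩
    · cases M2 with
      | nil => simp at h
      | cons y M2 =>
        simp at hx
        exact hMs x (by simp [hx.1])
    · intro a ha; exact hMs a (by simp [ha])
    · intro a ha; exact hMA a (by simp [ha])

theorem D1 {s : ℕ} (hs : s < S.K) (hB : S.HB) (hF : S.HF) (hD : S.DT s) {v b : U} {l A B : List U}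
    (hl : S.Mn v l) (hv : S.ten v = s) (e : v :: l = A ++ b :: B) (hA : ∀ a ∈ A, S.ten a ≤ s)
    (hb : s < S.ten b) : ∀ u ∈ A, S.Bs (s + 1) u b := by
  have key : ∀ u ∈ A, S.ten u = s → S.Bs (s + 1) u b := by
    intro u hu hus
    obtain ⟨A1, A2, rfl⟩ := List.append_of_mem hu
    have e' : v :: l = A1 ++ u :: (A2 ++ b :: B) := by simpa using e
    have hm := honest hl e' (by omega) (by omega)
    obtain ⟨c, hc⟩ := hB u (by omega)
    rw [hus] at hc
    obtain ⟨A3, B3, e3, hA3, h3, _⟩ := Bs_Mn (by omega) hc hm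
    have := (l_uniq (P := fun a => S.ten a < s + 1) (A := u :: A2) (A' := A3) (b := b) (b' := c)
      (by simpa using e3) (by
        intro a ha
        have := hA a (by simp at ha; rcases ha with rfl | h <;> simp_all)
        omega) hA3 (by omega) (by omega)).2.1
    rw [this]; exact hc
  intro u hu
  rcases Nat.lt_or_ge (S.ten u) s with h | h
  · obtain ⟨y, m, A', γ, C, h1, h2, h3, h4, h5, h6, h7, h8⟩ := Seg hs hB hF hD hl hv e hA hb hu h
    have hg := hD y m γ A' C h1 h2 h3 h4 h5 u h6
    rcases h7 with h7 | rfl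
    · refine Bs_trans (by omega) (by omega) hg (Or.inl (key γ h7 ?_))
      have := hA γ h7
      omega
    · exact Bs_trans (by omega) (by omega) hg (Or.inr ⟨by omega, rfl⟩)
  · exact key u hu (by have := hA u hu; omega)

theorem D_step {T : ℕ} (hT : T ≤ S.K) (hB : S.HB) (hF : S.HF) (hD : ∀ s < T, S.DT s) : S.DT T := by
  have main : ∀ n x l b A B, l.length ≤ n → S.Mn x l → S.ten x < T → x :: l = A ++ b :: B →
      (∀ a ∈ A, S.ten a < T) → T ≤ S.ten b → ∀ a ∈ A, S.Bs T a b := by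
    intro n
    induction n with
    | zero =>
      intro x l b A B hn hl hx e hA hb a ha
      have := congrArg List.length e
      simp at this
      have h0 : A ≠ [] := by rintro rfl; simp at ha
      have : 0 < A.length := List.length_pos_iff.2 h0
      have hA1 : A.length = 1 := by omega
      have hB0 : B.length = 0 := by omega
      omega
    | succ n ih =>
      intro x l b A B hn hl hx e hA hb u hu
      obtain ⟨c, hc⟩ := hB x (by omega)
      obtain ⟨A1, B1, e1, hA1, h1, hm1, p1, q1, n1⟩ := Bs_Mn (by omega) hc hl
      have hD1 := D1 (s := S.ten x) (by omega) hB hF (hD _ hx) hl rfl e1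
        (fun a ha => by have := hA1 a ha; omega) (by omega)
      obtain ⟨y, A1, rfl⟩ := List.exists_cons_of_ne_nil n1
      simp at q1
      by_cases hcT : S.ten c < T
      · -- c lies inside A
        have hcA : ∃ A2, A = (y :: A1) ++ c :: A2 ∧ B1 = A2 ++ b :: B := by
          rw [e] at e1
          rcases List.append_eq_append_iff.1 e1 with ⟨a', ha1, ha2⟩ | ⟨a', ha1, ha2⟩
          · exfalso
            cases a' with
            | nil => simp at ha2; rw [ha2.1] at hb; omega
            | cons z a' =>
              simp at ha2
              obtain ⟨rfl, _⟩ := ha2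
              have := hA1 b (by rw [ha1]; simp)
              omega
          · cases a' with
            | nil => simp at ha2; rw [ha2.1] at hcT; omega
            | cons z a' =>
              simp at ha2
              obtain ⟨rfl, h⟩ := ha2
              exact ⟨a', ha1, h⟩
        obtain ⟨A2, rfl, rfl⟩ := hcA
        have hrec := ih c (A2 ++ b :: B) b (c :: A2) B (by simp at q1 ⊢; omega) hm1 hcT rfl
          (fun a ha => hA a (List.mem_append_right _ ha)) hb
        have hcb := hrec c (by simp)
        rcases List.mem_append.1 hu with h | h
        · exact Bs_trans hT (by omega) (hD1 u h) (Or.inl hcb)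
        · exact hrec u h
      · have := l_uniq (P := fun a => S.ten a < T) (e.symm.trans e1) hA
          (fun a ha => by have := hA1 a ha; omega) (by omega) (by omega)
        obtain ⟨rfl, rfl, rfl⟩ := this
        exact Bs_trans hT (by omega) (hD1 u hu) (Or.inr ⟨hb, rfl⟩)
  exact fun x l b A B => main _ x l b A B le_rfl

theorem D_all (hB : S.HB) (hF : S.HF) : ∀ T, T ≤ S.K → S.DT T := by
  intro T
  induction T using Nat.strong_induction_on with
  | _ T ih =>
    intro hT
    exact D_step hT hB hF (fun s hs => ih s hs (by omega))

end Sys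

namespace Sys

variable {U : Type*} {S : Sys U}

theorem l_cmp {A B A1 B1 : List U} {b c : U} (h : A ++ b :: B = A1 ++ c :: B1) :
    (∃ A2, A = A1 ++ c :: A2 ∧ B1 = A2 ++ b :: B) ∨ (A = A1 ∧ b = c ∧ B = B1) ∨
      ∃ A2, A1 = A ++ b :: A2 ∧ B = A2 ++ c :: B1 := by
  rcases List.append_eq_append_iff.1 h with ⟨a', h1, h2⟩ | ⟨a', h1, h2⟩
  · cases a' with
    | nil =>
      simp at h1 h2
      exact Or.inr (Or.inl ⟨h1.symm, h2⟩)
    | cons z a' =>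
      simp at h2
      obtain ⟨rfl, h2⟩ := h2
      exact Or.inr (Or.inr ⟨a', h1, h2⟩)
  · cases a' with
    | nil =>
      simp at h1 h2
      exact Or.inr (Or.inl ⟨h1, h2.1.symm, h2.2.symm⟩)
    | cons z a' =>
      simp at h2
      obtain ⟨rfl, h2⟩ := h2
      exact Or.inl ⟨a', h1, h2⟩

theorem Fin (hB : S.HB) (hF : S.HF) : ∀ R, R ≤ S.K → ∀ n v l b A B u c T, l.length ≤ n →
    S.ten v < R → S.Mn v l → v :: l = A ++ b :: B → (∀ a ∈ A, S.ten a < R) → R ≤ S.ten b → u ∈ A →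
    S.Bs T u c → T ≤ R → c ∈ A ∨ c = b := by
  intro R
  induction R using Nat.strong_induction_on with
  | _ R ihR =>
    intro hR n
    induction n using Nat.strong_induction_on with
    | _ n ih =>
      intro v l b A B u c T hn hv hl e hA hb hu hc hT
      obtain ⟨T', hT'⟩ : ∃ T', T' = max T (S.ten v + 1) := ⟨_, rfl⟩
      have hT'R : T' ≤ R := by omega
      obtain ⟨c0, hc0⟩ := Bs_ex hB (T := T') (by omega) (u := v) (by omega)
      obtain ⟨A5, B5, e5, hA5, h5, hm5, _, q5, n5⟩ := Bs_Mn (by omega) hc0 hl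
      have top : u ∈ A5 → c ∈ A5 ∨ c = c0 := by
        intro hu5
        by_cases hTv : S.ten v < T
        · have : T' = T := by omega
          subst this
          have := D_all hB hF T' (by omega) v l c0 A5 B5 hl hTv e5 hA5 h5 u hu5
          exact Or.inr (Bs_uniq (by omega) hc this)
        · have : T' = S.ten v + 1 := by omega
          subst this
          have hcu := hc.1
          obtain ⟨y, m, A', γ, C, h1, h2, h3, h4, h5, h6, h7, h8⟩ :=
            Seg (s := S.ten v) (by omega) hB hF (D_all hB hF _ (by omega)) hl rfl e5
              (fun a ha => by have := hA5 a ha; omega) (by omega) hu5 (by omega)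
          rcases ihR (S.ten v) hv (by omega) m.length y m γ A' C u c T le_rfl h2 h1 h3 h4 h5 h6 hc
            (by omega) with h | rfl
          · exact Or.inl (h8 c h)
          · exact h7
      rcases l_cmp (e.symm.trans e5) with ⟨A2, rfl, rfl⟩ | ⟨rfl, rfl, rfl⟩ | ⟨A2, rfl, rfl⟩
      · rcases List.mem_append.1 hu with h | h
        · rcases top h with h | rfl
          · left; simp [h]
          · left; simp
        · have hpos := List.length_pos_iff.2 n5
          rcases ih (n - 1) (by omega) c0 (A2 ++ b :: B) b (c0 :: A2) B u c T (by omega)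
            (hA c0 (by simp)) hm5 rfl (fun a ha => hA a (List.mem_append_right _ ha)) hb h hc hT with h | h
          · exact Or.inl (List.mem_append_right _ h)
          · exact Or.inr h
      · exact top hu
      · have := hA5 b (by simp)
        omega

theorem Main (hF : S.HF) (bse : U → U) (hb : ∀ u, S.ten u < S.K → S.Bs (S.ten u + 1) u (bse u)) :
    ∀ (k : ℕ) (v : U) (l : List U), (∀ i < k, S.ten (bse^[i] v) < S.K) → S.F (bse^[k] v) →
      S.Mn v l → (k = 0 → l.length % 2 = 0) → ∀ u ∈ v :: l, S.ten u < S.K → bse u ∈ v :: l := by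
  have hB : S.HB := fun u hu => ⟨_, hb u hu⟩
  intro k
  induction k with
  | zero =>
    intro v l _ hf hl p u hu ht
    exfalso
    simp at hf
    have hp := p rfl
    cases l with
    | nil =>
      simp at hu
      subst hu
      unfold ten at ht
      obtain ⟨m, hm, m1, m2⟩ := lev_ex (S := S) (i := 1) (u := u) (by omega)
      have := hF u m hf hm.1 (by omega)
      omega
    | cons y l =>
      simp at hp
      exact S.mt_nF (S.mt_symm ((AP_cons.1 hl.1).2.1.2.2 (by omega))) hf
  | succ k ih =>
    intro v l hk hf hl _ u hu ht
    have hv := hk 0 (by omega)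
    simp at hv
    obtain ⟨A, B, e, hA, h1, hm, p, q, n⟩ := Bs_Mn (by omega) (hb v hv) hl
    rw [e] at hu
    rw [e]
    rcases List.mem_append.1 hu with h | h
    · have hu1 := hA u h
      rcases Fin hB hF (S.ten v + 1) (by omega) l.length v l (bse v) A B u (bse u) (S.ten u + 1) le_rfl
        (by omega) hl e hA h1 h (hb u ht) (by omega) with h | h
      · simp [h]
      · simp [h]
    · refine List.mem_append_right _ (ih (bse v) B ?_ ?_ hm (fun _ => p) u h ht)
      · intro i hi
        have := hk (i + 1) (by omega)
        simpa using this
      · simpa using hf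

end Sys

section Transl

variable {G : SimpleGraph V} {M : G.Subgraph}

def toSys (hM : M.IsMatching) (K : ℕ) : Sys V where
  Ad := G.Adj
  Mt := M.Adj
  F := fun f => f ∉ M.verts
  K := K
  ad_symm := fun h => h.symm
  mt_symm := fun h => h.symm
  mt_ad := fun h => h.adj_sub
  mt_uniq := fun {x y z} h h' => (hM (M.edge_vert h)).unique h h'
  mt_ne := fun h => h.ne
  mt_nF := fun h => not_not_intro (M.edge_vert h)

theorem walk_AP (hM : M.IsMatching) (K : ℕ) {f v : V} (w : G.Walk f v) (hf : f ∉ M.verts)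
    (hp : w.IsPath) (ha : IsAlt G M w) : (toSys hM K).AP w.support.reverse := by
  induction w using SimpleGraph.Walk.concatRec with
  | Hnil => exact Sys.AP.base _ hf
  | @Hconcat a b c p h ih =>
    have hp' : p.IsPath := by
      rw [SimpleGraph.Walk.isPath_def] at hp ⊢
      rw [SimpleGraph.Walk.support_concat] at hp
      exact (List.nodup_append.1 hp).1
    have hal : IsAlt G M p := by
      intro i hi
      have := ha i (by simp [SimpleGraph.Walk.edges_concat]; simp at hi; omega)
      simpa [SimpleGraph.Walk.edges_concat, List.getElem_append_left hi] using this
    have h1 := ih hf hp' hal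
    have e : p.support.reverse = b :: p.reverse.support.tail := by
      rw [← SimpleGraph.Walk.support_reverse]
      exact p.reverse.cons_tail_support.symm
    have hlen : p.reverse.support.tail.length = p.length := by simp
    have e2 : (p.concat h).support.reverse = c :: b :: p.reverse.support.tail := by
      rw [SimpleGraph.Walk.support_concat, ← e]; simp
    rw [e2]
    rw [e] at h1
    refine Sys.AP_cons.2 ⟨h1, ⟨h, ?_⟩, ?_⟩
    · have := ha p.length (by simp)
      rw [hlen, ← Nat.odd_iff, ← this]
      simp [SimpleGraph.Walk.edges_concat, toSys]
    · have := hp.support_nodup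
      rw [← List.nodup_reverse, e2] at this
      exact (List.nodup_cons.1 this).1

theorem AP_walk (hM : M.IsMatching) (K : ℕ) {L : List V} (h : (toSys hM K).AP L) :
    ∀ v l, L = v :: l → ∃ (f : V) (w : G.Walk f v), f ∉ M.verts ∧ w.IsPath ∧ IsAlt G M w ∧
      w.support = (v :: l).reverse := by
  induction h with
  | base f hf =>
    intro v l e
    simp at e
    obtain ⟨rfl, rfl⟩ := e
    exact ⟨f, SimpleGraph.Walk.nil, hf, by simp, fun i hi => by simp at hi, by simp⟩
  | step x y l h1 h2 h3 ih =>
    intro v l' e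
    simp at e
    obtain ⟨rfl, rfl⟩ := e
    obtain ⟨f, w, hf, hp, ha, hs⟩ := ih x l rfl
    have hlen : w.length = l.length := by
      have := congrArg List.length hs
      simpa using this
    have hadj : G.Adj x y := h2.1
    have hmt : M.Adj x y ↔ l.length % 2 = 1 := h2.2
    refine ⟨f, w.concat hadj, hf, ?_, ?_, ?_⟩
    · refine hp.concat ?_ _
      rw [hs]; exact fun h => h3 (List.mem_reverse.1 h)
    · intro i hi
      simp at hi
      by_cases hi' : i < w.length
      · have := ha i (by simpa using hi')
        simpa [SimpleGraph.Walk.edges_concat, List.getElem_append_left, hi'] using this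
      · have : i = w.length := by omega
        subst this
        rw [← hlen, ← Nat.odd_iff] at hmt
        rw [← hmt]
        simp [SimpleGraph.Walk.edges_concat, toSys]
    · rw [SimpleGraph.Walk.support_concat, hs]
      simp

theorem walk_AP' (hM : M.IsMatching) (K : ℕ) {f v : V} (w : G.Walk f v) (hf : f ∉ M.verts)
    (hp : w.IsPath) (ha : IsAlt G M w) : ∃ l, w.support.reverse = v :: l ∧ l.length = w.length ∧
      (toSys hM K).AP (v :: l) := by
  have e : w.support.reverse = v :: w.reverse.support.tail := by
    rw [← SimpleGraph.Walk.support_reverse]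
    exact w.reverse.cons_tail_support.symm
  exact ⟨_, e, by simp, e ▸ walk_AP hM K w hf hp ha⟩

theorem AP_walk' (hM : M.IsMatching) (K : ℕ) {v : V} {l : List V} (h : (toSys hM K).AP (v :: l)) :
    ∃ (f : V) (w : G.Walk f v), f ∉ M.verts ∧ w.IsPath ∧ IsAlt G M w ∧
      w.support = (v :: l).reverse ∧ w.length = l.length := by
  obtain ⟨f, w, h1, h2, h3, h4⟩ := AP_walk hM K h v l rfl
  refine ⟨f, w, h1, h2, h3, h4, ?_⟩
  have := congrArg List.length h4
  simpa using this

theorem lev0_eq (hM : M.IsMatching) (K : ℕ) (u : V) :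
    (((toSys hM K).lev 0 u : ℕ) : ℕ∞) = min (K : ℕ∞) (evenlevel G M u) := by
  apply le_antisymm
  · apply le_min
    · exact_mod_cast Sys.lev_le_K 0 u
    · apply le_sInf
      rintro n ⟨f, w, hf, hp, ha, he, rfl⟩
      obtain ⟨l, _, h2, h3⟩ := walk_AP' hM K w hf hp ha
      rw [← h2]
      rw [Nat.even_iff] at he
      exact_mod_cast Sys.lev_le h3 (by omega)
  · by_cases h : (toSys hM K).lev 0 u < K
    · obtain ⟨l, hl, h1, h2⟩ := Sys.lev_ex (S := toSys hM K) h
      obtain ⟨f, w, hf, hp, ha, _, h3⟩ := AP_walk' hM K hl.1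
      refine (min_le_right _ _).trans (sInf_le ⟨f, w, hf, hp, ha, ?_, ?_⟩)
      · rw [Nat.even_iff]; omega
      · rw [h3, h1]
    · refine (min_le_left _ _).trans ?_
      exact_mod_cast not_lt.1 h

theorem lev1_eq (hM : M.IsMatching) (K : ℕ) (u : V) :
    (((toSys hM K).lev 1 u : ℕ) : ℕ∞) = min (K : ℕ∞) (oddlevel G M u) := by
  apply le_antisymm
  · apply le_min
    · exact_mod_cast Sys.lev_le_K 1 u
    · apply le_sInf
      rintro n ⟨f, w, hf, hp, ha, he, rfl⟩
      obtain ⟨l, _, h2, h3⟩ := walk_AP' hM K w hf hp ha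
      rw [← h2]
      rw [Nat.odd_iff] at he
      exact_mod_cast Sys.lev_le h3 (by omega)
  · by_cases h : (toSys hM K).lev 1 u < K
    · obtain ⟨l, hl, h1, h2⟩ := Sys.lev_ex (S := toSys hM K) h
      obtain ⟨f, w, hf, hp, ha, _, h3⟩ := AP_walk' hM K hl.1
      refine (min_le_right _ _).trans (sInf_le ⟨f, w, hf, hp, ha, ?_, ?_⟩)
      · rw [Nat.odd_iff]; omega
      · rw [h3, h1]
    · refine (min_le_left _ _).trans ?_
      exact_mod_cast not_lt.1 h

theorem lev0_of (hM : M.IsMatching) (K : ℕ) (u : V) (h : (toSys hM K).lev 0 u < K) :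
    (((toSys hM K).lev 0 u : ℕ) : ℕ∞) = evenlevel G M u := by
  have := lev0_eq hM K u
  rcases min_choice (K : ℕ∞) (evenlevel G M u) with h1 | h1 <;> rw [h1] at this
  · have : (toSys hM K).lev 0 u = K := by exact_mod_cast this
    omega
  · exact this

theorem lev1_of (hM : M.IsMatching) (K : ℕ) (u : V) (h : (toSys hM K).lev 1 u < K) :
    (((toSys hM K).lev 1 u : ℕ) : ℕ∞) = oddlevel G M u := by
  have := lev1_eq hM K u
  rcases min_choice (K : ℕ∞) (oddlevel G M u) with h1 | h1 <;> rw [h1] at this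
  · have : (toSys hM K).lev 1 u = K := by exact_mod_cast this
    omega
  · exact this

theorem ten_of (hM : M.IsMatching) (K : ℕ) (u : V) (h : (toSys hM K).ten u < K) :
    (((toSys hM K).ten u : ℕ) : ℕ∞) = tenacity G M u := by
  unfold Sys.ten at *
  unfold tenacity
  rw [← lev0_of hM K u (by omega), ← lev1_of hM K u (by omega)]
  push_cast; rfl

theorem ten_le (hM : M.IsMatching) (K : ℕ) (u : V) :
    (((toSys hM K).ten u : ℕ) : ℕ∞) ≤ tenacity G M u := by
  unfold Sys.ten tenacity
  push_cast
  rw [lev0_eq, lev1_eq]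
  exact add_le_add (min_le_right _ _) (min_le_right _ _)

theorem ten_lt (hM : M.IsMatching) (K : ℕ) (u : V) (h : tenacity G M u < K) :
    (toSys hM K).ten u < K := by
  have := (ten_le hM K u).trans_lt h
  exact_mod_cast this

theorem takeUntil_len {f v a : V} (w : G.Walk f v) (hp : w.IsPath) {X Y : List V}
    (e : w.support = X ++ a :: Y) (h : a ∈ w.support) : (w.takeUntil a h).length = X.length := by
  have e1 : (w.takeUntil a h).support.reverse = a :: (w.takeUntil a h).reverse.support.tail := by
    rw [← SimpleGraph.Walk.support_reverse]
    exact (w.takeUntil a h).reverse.cons_tail_support.symm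
  have e2 := congrArg List.reverse e1
  rw [List.reverse_reverse] at e2
  have e3 := w.take_spec h
  have e4 : w.support = (w.takeUntil a h).support ++ (w.dropUntil a h).support.tail := by
    rw [← SimpleGraph.Walk.support_append, e3]
  rw [e2] at e4
  simp only [List.reverse_cons, List.append_assoc, List.singleton_append] at e4
  have nd := hp.support_nodup
  have := (Sys.l_nodup (by rw [← e4]; exact nd) (e4.symm.trans e)).1
  rw [← this]
  simp

theorem Bs_of (hM : M.IsMatching) {K : ℕ} (hK : (K : ℕ∞) ≤ lm G M) {bse : V → V}
    (hbse : BaseFn G M bse) (u : V) (hu : (toSys hM K).ten u < K) :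
    (toSys hM K).Bs ((toSys hM K).ten u + 1) u (bse u) := by
  refine ⟨by omega, ?_⟩
  intro l hl
  have htu := ten_of hM K u hu
  have hut : tenacity G M u < lm G M := by
    rw [← htu]
    refine lt_of_lt_of_le ?_ hK
    exact_mod_cast hu
  obtain ⟨f, w, hf, hp, ha, hs, hlen⟩ := AP_walk' hM K hl.1
  have hu' := hu
  unfold Sys.ten at hu'
  have hmin : IsMinPathTo G M u f w := by
    refine ⟨hf, hp, ha, ?_⟩
    rcases Nat.even_or_odd w.length with h | h
    · refine Or.inl ⟨h, ?_⟩
      rw [Nat.even_iff] at h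
      rw [← lev0_of hM K u (by omega), hl.lev (i := 0) (by omega), hlen]
    · refine Or.inr ⟨h, ?_⟩
      rw [Nat.odd_iff] at h
      rw [← lev1_of hM K u (by omega), hl.lev (i := 1) (by omega), hlen]
  obtain ⟨hb, h1, h2⟩ := hbse u hut f w hmin
  have hbl : bse u ∈ u :: l := by
    have := hb; rw [hs] at this; exact List.mem_reverse.1 this
  obtain ⟨A, B, e⟩ := List.append_of_mem hbl
  refine ⟨A, B, e, ?_, ?_⟩
  · intro a haA
    by_contra hc
    obtain ⟨A1, A2, rfl⟩ := List.append_of_mem haA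
    have ham : a ∈ w.support := by rw [hs, e]; simp
    have h3 := h2 a ham (by
      rw [← htu]
      refine lt_of_lt_of_le ?_ (ten_le hM K a)
      exact_mod_cast (by omega))
    rw [takeUntil_len w hp (X := B.reverse ++ bse u :: A2.reverse) (Y := A1.reverse)
        (by rw [hs, e]; simp),
      takeUntil_len w hp (X := B.reverse) (Y := A2.reverse ++ a :: A1.reverse)
        (by rw [hs, e]; simp)] at h3
    simp at h3
  · by_contra hc
    have := ten_of hM K (bse u) (by omega)
    rw [← htu, ← this] at h1
    have : (toSys hM K).ten u < (toSys hM K).ten (bse u) := by exact_mod_cast h1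
    omega

theorem HF_of (hM : M.IsMatching) {K : ℕ} (hK : (K : ℕ∞) ≤ lm G M) : (toSys hM K).HF := by
  intro f l hf hl p
  obtain ⟨g, w, hg, hp, ha, hs, hlen⟩ := AP_walk' hM K hl
  have hne : g ≠ f := by
    rintro rfl
    have := (SimpleGraph.Walk.isPath_iff_nil.1 hp).length_eq_zero
    rw [this] at hlen
    rw [← hlen] at p
    simp at p
  have : lm G M ≤ w.length := sInf_le ⟨g, f, w, hg, hf, hne, hp, ha, by rw [Nat.odd_iff]; omega, rfl⟩
  have := hK.trans this
  rw [hlen] at this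
  exact_mod_cast this

theorem K_ex {t : ℕ → ℕ∞} {L : ℕ∞} (k : ℕ) (h : ∀ i < k, t i < L) :
    ∃ K : ℕ, (K : ℕ∞) ≤ L ∧ ∀ i < k, t i < K := by
  induction k with
  | zero => exact ⟨0, by simp, by simp⟩
  | succ k ih =>
    obtain ⟨K, h1, h2⟩ := ih (fun i hi => h i (by omega))
    have h3 := h k (by omega)
    obtain ⟨n, hn⟩ := ENat.ne_top_iff_exists.1 (ne_top_of_lt h3)
    rw [← hn] at h3
    refine ⟨max K (n + 1), ?_, ?_⟩
    · push_cast
      exact max_le h1 (Order.add_one_le_of_lt h3)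
    · intro i hi
      by_cases e : i = k
      · subst e
        rw [← hn]
        exact_mod_cast (by omega)
      · refine (h2 i (by omega)).trans_le ?_
        exact_mod_cast le_max_left _ _

end Transl

/-- If `v` has all iterated bases defined and `p` is an `evenlevel(v)` or `oddlevel(v)`
path, then for every vertex `u` on `p`, all iterated bases of `u` lie on `p`. -/
theorem stmt14 (G : SimpleGraph V) (M : G.Subgraph) (hM : M.IsMatching)
    (bse : V → V) (hbse : BaseFn G M bse)
    (v : V) (k : ℕ) (hk : 1 ≤ k) (hunm : bse^[k] v ∉ M.verts)
    (hdef : ∀ i, i < k → tenacity G M (bse^[i] v) < lm G M)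
    (f : V) (w : G.Walk f v) (hw : IsMinPathTo G M v f w) :
    ∀ u ∈ w.support, ∀ j, 1 ≤ j →
      (∀ i, i < j → tenacity G M (bse^[i] u) < lm G M) →
      bse^[j] u ∈ w.support := by
  have hstep : ∀ u ∈ w.support, tenacity G M u < lm G M → bse u ∈ w.support := by
    intro u hu hut
    obtain ⟨K1, h1, h2⟩ := K_ex (t := fun i => tenacity G M (bse^[i] v)) k hdef
    obtain ⟨K2, h3, h4⟩ := K_ex (t := fun _ => tenacity G M u) 1 (fun _ _ => hut)
    have hK : ((max K1 K2 : ℕ) : ℕ∞) ≤ lm G M := by push_cast; exact max_le h1 h3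
    obtain ⟨K, hKe⟩ : ∃ K, K = max K1 K2 := ⟨_, rfl⟩
    rw [← hKe] at hK
    have hd : ∀ i < k, (toSys hM K).ten (bse^[i] v) < K := by
      intro i hi
      apply ten_lt
      refine (h2 i hi).trans_le ?_
      exact_mod_cast (by omega)
    have hu2 : (toSys hM K).ten u < K := by
      apply ten_lt
      refine (h4 0 (by omega)).trans_le ?_
      exact_mod_cast (by omega)
    obtain ⟨hf, hp, ha, hmin⟩ := hw
    obtain ⟨l, hl1, hl2, hl3⟩ := walk_AP' hM K w hf hp ha
    have hv := hd 0 (by omega)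
    simp only [Function.iterate_zero, id] at hv
    unfold Sys.ten at hv
    have hmn : (toSys hM K).Mn v l := by
      rcases hmin with ⟨q, hq⟩ | ⟨q, hq⟩
      · rw [← lev0_of hM K v (by omega)] at hq
        have : w.length = (toSys hM K).lev 0 v := by exact_mod_cast hq
        rw [Nat.even_iff] at q
        exact Sys.Mn_of hl3 (i := 0) (by omega) (by omega)
      · rw [← lev1_of hM K v (by omega)] at hq
        have : w.length = (toSys hM K).lev 1 v := by exact_mod_cast hq
        rw [Nat.odd_iff] at q
        exact Sys.Mn_of hl3 (i := 1) (by omega) (by omega)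
    have := Sys.Main (HF_of hM hK) bse (fun u hu => Bs_of hM hK hbse u hu) k v l hd hunm hmn
      (by omega) u (by rw [← hl1]; simpa using hu) hu2
    rw [← hl1] at this
    simpa using this
  intro u hu j
  induction j with
  | zero => intro h; omega
  | succ j ih =>
    intro _ hj
    rw [Function.iterate_succ_apply']
    apply hstep _ _ (hj j (by omega))
    by_cases h0 : j = 0
    · subst h0; exact hu
    · exact ih (by omega) (fun i hi => hj i (by omega))

end MV
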